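/- arXiv:1606.05306 — 3 statements merged into one kernel-verified Lean document; each statement's English description precedes it below -/
import Mathlib

section
/- Let μ* = Σ_{i=1}^M c_i δ_{x_i} with nonzero real coefficients c_i and pairwise distinct points C = {x_1,…,x_M} ⊂ SO(3), and let N ∈ ℕ. Assume that for every sign vector (u_i)_{i=1}^M ∈ {−1,1}^M there exists a function q ∈ Π_N (a dual certificate) such that q(x_i) = u_i for all x_i ∈ C and |q(x)| < 1 for all x ∈ SO(3) \ C. Then μ* is the unique solution of the minimization problem: minimize ‖μ‖_TV over all finite signed Borel measures μ on SO(3) subject to ⟨μ, D^l_{k,m}⟩ = ⟨μ*, D^l_{k,m}⟩ for all 0 ≤ l ≤ N and all −l ≤ k,m ≤ l. -/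
noncomputable section

open MeasureTheory
open scoped ENNReal

abbrev Mat3 := Matrix (Fin 3) (Fin 3) ℝ

/-- membership in SO(3) -/
def IsSO3 (x : Mat3) : Prop := x.transpose * x = 1 ∧ x.det = 1

/-- the rotation group SO(3) -/
def SO3 : Type := {x : Mat3 // IsSO3 x}

instance : TopologicalSpace SO3 := instTopologicalSpaceSubtype
instance : MeasurableSpace SO3 := borel SO3

/-- coercion to matrices -/
instance : CoeHead SO3 Mat3 := ⟨Subtype.val⟩

/-- rotation angle -/
def rotAngle (x : Mat3) : ℝ := Real.arccos ((Matrix.trace x - 1) / 2)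

/-- rotation about the z-axis -/
def Rz (t : ℝ) : Mat3 :=
  !![Real.cos t, -Real.sin t, 0; Real.sin t, Real.cos t, 0; 0, 0, 1]

/-- rotation about the x-axis -/
def Rx (t : ℝ) : Mat3 :=
  !![1, 0, 0; 0, Real.cos t, -Real.sin t; 0, Real.sin t, Real.cos t]

/-- the normalizing constant C_{l,k,m} of the Wigner function P^l_{k,m} -/
def wignerC (l : ℕ) (k m : ℤ) : ℂ :=
  ((-1 : ℂ) ^ ((l : ℤ) - k) * Complex.I ^ (m - k) /
      (2 ^ l * ((((l : ℤ) - k).toNat.factorial : ℝ) : ℂ))) *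
    (Real.sqrt
      (((((l : ℤ) - k).toNat.factorial : ℝ) * ((((l : ℤ) + m).toNat.factorial : ℝ))) /
        ((((l : ℤ) + k).toNat.factorial : ℝ) * ((((l : ℤ) - m).toNat.factorial : ℝ)))) : ℝ)

/-- the function P^l_{k,m} -/
def wignerP (l : ℕ) (k m : ℤ) (t : ℝ) : ℂ :=
  wignerC l k m * ((1 - t : ℂ) ^ (-(((m - k : ℤ) : ℂ)) / 2)) *
    ((1 + t : ℂ) ^ (-(((m + k : ℤ) : ℂ)) / 2)) *
    ((iteratedDeriv ((l : ℤ) - m).toNat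
        (fun u : ℝ => (1 - u) ^ ((l : ℤ) - k).toNat * (1 + u) ^ ((l : ℤ) + k).toNat) t : ℝ) : ℂ)

/-- the Wigner D-function in Euler angles -/
def wignerDFormula (l : ℕ) (k m : ℤ) (α β γ : ℝ) : ℂ :=
  Complex.exp (-(k : ℂ) * α * Complex.I) * wignerP l k m (Real.cos β) *
    Complex.exp (-(m : ℂ) * γ * Complex.I)

/-- `D` is the family of Wigner D-functions (on matrices) -/
def IsWignerFamily (D : ℕ → ℤ → ℤ → Mat3 → ℂ) : Prop :=
  ∀ (l : ℕ) (k m : ℤ), -(l : ℤ) ≤ k → k ≤ l → -(l : ℤ) ≤ m → m ≤ l →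
    ∀ α β γ : ℝ, 0 ≤ β → β ≤ Real.pi →
      D l k m (Rz α * Rx β * Rz γ) = wignerDFormula l k m α β γ

/-- the Dirac measure at `x` as a signed measure -/
def diracSM (x : SO3) : SignedMeasure SO3 := (Measure.dirac x).toSignedMeasure

/-- pairing of a signed measure with a complex-valued function, ⟨μ, f⟩ = ∫ f dμ -/
def pairSM (μ : SignedMeasure SO3) (f : SO3 → ℂ) : ℂ :=
  (∫ a, f a ∂μ.toJordanDecomposition.posPart) - ∫ a, f a ∂μ.toJordanDecomposition.negPart

/-- total variation norm ‖μ‖_TV = |μ|(SO(3)) -/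
def tvNorm (μ : SignedMeasure SO3) : ℝ≥0∞ := μ.totalVariation Set.univ

end

/-!
Let `ν = μ - μ₀`, where `μ₀` lives on the set `C` of nodes, and write its polar decomposition as
`dν = u d|ν|` with `u = ±1`. If `q` is a certificate with `q = u` on `C`, then `∫ q dν = 0` reads
`|ν|(C) = -∫_{Cᶜ} u q d|ν|`, and since `|q| < 1` off `C` this gives `|ν|(C) < |ν|(Cᶜ)` as soon as
`ν ≠ 0`. Hence
`|μ₀|(C) ≤ |μ|(C) + |ν|(C) < |μ|(C) + |ν|(Cᶜ) = |μ|(C) + |μ|(Cᶜ)`.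

Integrability of the Wigner functions comes from their continuity on the compact group `SO(3)`. The
Rodrigues formula is continuous in the Euler angles because the negative powers of `1 ± t` are
absorbed by zeros of the iterated derivative, and continuity descends to `SO(3)` because the Euler
parametrization of a compact box is a quotient map; no continuous choice of angles is needed.
-/

noncomputable section

open MeasureTheory
open scoped ENNReal

section SignedMeasureIntegral

variable {X E : Type*} [MeasurableSpace X] [NormedAddCommGroup E] [NormedSpace ℝ E]
  {ν : SignedMeasure X} {f : X → E}

instance isFiniteMeasure_variation (ν : SignedMeasure X) : IsFiniteMeasure ν.variation := by
  rw [← SignedMeasure.totalVariation_eq_variation]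
  infer_instance

lemma posPart_le_variation (ν : SignedMeasure X) :
    ν.toJordanDecomposition.posPart ≤ ν.variation := by
  rw [← SignedMeasure.totalVariation_eq_variation]
  exact Measure.le_add_right le_rfl

lemma negPart_le_variation (ν : SignedMeasure X) :
    ν.toJordanDecomposition.negPart ≤ ν.variation := by
  rw [← SignedMeasure.totalVariation_eq_variation]
  exact Measure.le_add_left le_rfl

lemma integral_eq_integral_posPart_sub_integral_negPart (hf : ν.Integrable f) :
    ∫ᵛ z, f z ∂<•ν =
      ∫ z, f z ∂ν.toJordanDecomposition.posPart - ∫ z, f z ∂ν.toJordanDecomposition.negPart := by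
  conv_lhs => rw [← ν.toSignedMeasure_toJordanDecomposition, JordanDecomposition.toSignedMeasure]
  rw [VectorMeasure.integral_sub_vectorMeasure, VectorMeasure.integral_toSignedMeasure,
    VectorMeasure.integral_toSignedMeasure]
  · simpa [VectorMeasure.Integrable] using hf.mono_measure (posPart_le_variation ν)
  · simpa [VectorMeasure.Integrable] using hf.mono_measure (negPart_le_variation ν)

lemma exists_sign_ae_posPart_ae_negPart (ν : SignedMeasure X) :
    ∃ u : X → ℝ, Measurable u ∧ (∀ z, u z = 1 ∨ u z = -1) ∧
      (∀ᵐ z ∂ν.toJordanDecomposition.posPart, u z = 1) ∧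
      ∀ᵐ z ∂ν.toJordanDecomposition.negPart, u z = -1 := by
  classical
  obtain ⟨s, hs, hpos, hneg⟩ := ν.toJordanDecomposition.mutuallySingular
  refine ⟨s.piecewise (fun _ => -1) (fun _ => 1), measurable_const.piecewise hs measurable_const,
    fun z => ?_, ?_, ?_⟩
  · by_cases hz : z ∈ s <;> simp [hz]
  · filter_upwards [measure_eq_zero_iff_ae_notMem.mp hpos] with z hz
    exact Set.piecewise_eq_of_notMem _ _ _ hz
  · filter_upwards [measure_eq_zero_iff_ae_notMem.mp hneg] with z hz
    exact Set.piecewise_eq_of_mem _ _ _ (Set.notMem_compl_iff.mp hz)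

/-- The polar decomposition `dν = u d|ν|`. -/
lemma exists_sign_integral_eq_integral_smul_variation (ν : SignedMeasure X) :
    ∃ u : X → ℝ, Measurable u ∧ (∀ z, u z = 1 ∨ u z = -1) ∧
      ∀ f : X → E, ν.Integrable f →
        Integrable (fun z => u z • f z) ν.variation ∧
        ∫ᵛ z, f z ∂<•ν = ∫ z, u z • f z ∂ν.variation := by
  obtain ⟨u, hu, hu1, hpos, hneg⟩ := exists_sign_ae_posPart_ae_negPart ν
  refine ⟨u, hu, hu1, fun f hf => ?_⟩
  have huf : Integrable (fun z => u z • f z) ν.variation := by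
    refine hf.bdd_smul 1 hu.aestronglyMeasurable (.of_forall fun z => ?_)
    rcases hu1 z with h | h <;> simp [h]
  have hpos' : ∫ z, u z • f z ∂ν.toJordanDecomposition.posPart =
      ∫ z, f z ∂ν.toJordanDecomposition.posPart :=
    integral_congr_ae (hpos.mono fun z hz => by simp only [hz, one_smul])
  have hneg' : ∫ z, u z • f z ∂ν.toJordanDecomposition.negPart =
      -∫ z, f z ∂ν.toJordanDecomposition.negPart := by
    rw [← integral_neg]
    exact integral_congr_ae (hneg.mono fun z hz => by simp only [hz, neg_smul, one_smul])
  refine ⟨huf, ?_⟩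
  rw [integral_eq_integral_posPart_sub_integral_negPart hf,
    ← SignedMeasure.totalVariation_eq_variation, SignedMeasure.totalVariation,
    integral_add_measure (huf.mono_measure (posPart_le_variation ν))
      (huf.mono_measure (negPart_le_variation ν)), hpos', hneg', sub_eq_add_neg]

variable {𝕜 : Type*} [NontriviallyNormedField 𝕜] [NormedSpace 𝕜 E] [SMulCommClass ℝ 𝕜 E]

lemma integral_const_smul_of_integrable (a : 𝕜) (hf : ν.Integrable f) :
    ∫ᵛ z, a • f z ∂<•ν = a • ∫ᵛ z, f z ∂<•ν := by
  rw [integral_eq_integral_posPart_sub_integral_negPart hf,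
    integral_eq_integral_posPart_sub_integral_negPart (hf.fun_smul a), integral_smul,
    integral_smul, smul_sub]

lemma integrable_and_integral_eq_zero_of_mem_span {S : Set (X → E)}
    (hS : ∀ f ∈ S, ν.Integrable f ∧ ∫ᵛ z, f z ∂<•ν = 0) {q : X → E}
    (hq : q ∈ Submodule.span 𝕜 S) : ν.Integrable q ∧ ∫ᵛ z, q z ∂<•ν = 0 := by
  induction hq using Submodule.span_induction with
  | mem f hf => exact hS f hf
  | zero => exact ⟨integrable_zero _ _ _, VectorMeasure.integral_zero⟩
  | add f g _ _ hf hg =>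
    refine ⟨hf.1.add hg.1, ?_⟩
    rw [VectorMeasure.integral_add hf.1 hg.1, hf.2, hg.2, add_zero]
  | smul a f _ hf =>
    refine ⟨hf.1.smul a, ?_⟩
    simp only [Pi.smul_apply, integral_const_smul_of_integrable a hf.1, hf.2, smul_zero]

end SignedMeasureIntegral

section NullSpace

variable {X 𝕜 : Type*} [MeasurableSpace X] [RCLike 𝕜] {C : Set X}

lemma measureReal_le_setIntegral_compl_norm {ρ : Measure X} {g : X → 𝕜}
    (hC : MeasurableSet C) (hg : Integrable g ρ) (hgC : Set.EqOn g 1 C)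
    (hg0 : ∫ z, g z ∂ρ = 0) : ρ.real C ≤ ∫ z in Cᶜ, ‖g z‖ ∂ρ := by
  have hCint : ∫ z in C, g z ∂ρ = (ρ.real C : 𝕜) := by
    simp [setIntegral_congr_fun hC hgC, RCLike.real_smul_eq_coe_mul]
  calc ρ.real C = ‖∫ z in C, g z ∂ρ‖ := by
        rw [hCint, RCLike.norm_of_nonneg measureReal_nonneg]
    _ = ‖∫ z in Cᶜ, g z ∂ρ‖ := by
        rw [eq_neg_of_add_eq_zero_left ((integral_add_compl hC hg).trans hg0), norm_neg]
    _ ≤ ∫ z in Cᶜ, ‖g z‖ ∂ρ := norm_integral_le_integral_norm _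

lemma setIntegral_lt_measureReal {ρ : Measure X} [IsFiniteMeasure ρ] {A : Set X} {g : X → ℝ}
    (hA : MeasurableSet A) (hρA : ρ A ≠ 0) (hg : IntegrableOn g A ρ) (hg1 : ∀ z ∈ A, g z < 1) :
    ∫ z in A, g z ∂ρ < ρ.real A := by
  have hsupp : A ⊆ Function.support fun z => 1 - g z :=
    fun z hz => (sub_pos.mpr (hg1 z hz)).ne'
  have hgap : 0 < ∫ z in A, (1 - g z) ∂ρ := by
    rw [setIntegral_pos_iff_support_of_nonneg_ae, Set.inter_eq_self_of_subset_right hsupp]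
    · exact hρA.bot_lt
    · exact ae_restrict_of_forall_mem hA fun z hz => (sub_pos.mpr (hg1 z hz)).le
    · exact (integrable_const 1).sub hg
  rw [integral_sub (integrable_const 1) hg, setIntegral_const, smul_eq_mul, mul_one] at hgap
  exact sub_pos.mp hgap

lemma measure_lt_measure_compl_of_integral_eq_zero {ρ : Measure X} [IsFiniteMeasure ρ]
    (hρ : ρ ≠ 0) (hC : MeasurableSet C) {g : X → 𝕜} (hg : Integrable g ρ)
    (hgC : Set.EqOn g 1 C) (hgC' : ∀ z ∉ C, ‖g z‖ < 1) (hg0 : ∫ z, g z ∂ρ = 0) :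
    ρ C < ρ Cᶜ := by
  have hle : ρ.real C ≤ ∫ z in Cᶜ, ‖g z‖ ∂ρ :=
    measureReal_le_setIntegral_compl_norm hC hg hgC hg0
  have hCc : ρ Cᶜ ≠ 0 := fun h => by
    rw [Measure.restrict_eq_zero.mpr h, integral_zero_measure] at hle
    have hC0 : ρ C = 0 :=
      (measureReal_eq_zero_iff (by finiteness)).mp (hle.antisymm measureReal_nonneg)
    exact hρ (Measure.measure_univ_eq_zero.mp
      (by rw [← measure_add_measure_compl hC, hC0, h, add_zero]))
  rw [← ENNReal.toReal_lt_toReal (measure_ne_top ρ C) (measure_ne_top ρ Cᶜ)]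
  exact hle.trans_lt (setIntegral_lt_measureReal hC.compl hCc hg.norm.integrableOn hgC')

/-- The null space property of compressed sensing: taking the signs of `q` from the polar
decomposition of `ν` itself turns `∫ᵛ q ∂ν = 0` into a comparison of masses. -/
lemma variation_lt_variation_compl {ν : SignedMeasure X} (hν : ν ≠ 0) (hC : MeasurableSet C)
    {S : Set (X → 𝕜)} (hS : ∀ f ∈ S, ν.Integrable f ∧ ∫ᵛ z, f z ∂<•ν = 0)
    (hcert : ∀ u : X → ℝ, Measurable u → (∀ z, u z = 1 ∨ u z = -1) →
      ∃ q ∈ Submodule.span 𝕜 S, (∀ z ∈ C, q z = (u z : 𝕜)) ∧ ∀ z ∉ C, ‖q z‖ < 1) :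
    ν.variation C < ν.variation Cᶜ := by
  obtain ⟨u, hu, hu1, hpolar⟩ := exists_sign_integral_eq_integral_smul_variation (E := 𝕜) ν
  obtain ⟨q, hq, hqC, hqC'⟩ := hcert u hu hu1
  obtain ⟨hqint, hq0⟩ := integrable_and_integral_eq_zero_of_mem_span hS hq
  obtain ⟨huq, hint⟩ := hpolar q hqint
  refine measure_lt_measure_compl_of_integral_eq_zero
    (mt VectorMeasure.variation_eq_zero.mp hν) hC huq (fun z hz => ?_) (fun z hz => ?_)
    (hint.symm.trans hq0)
  · rcases hu1 z with h | h <;> simp [hqC z hz, h]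
  · rcases hu1 z with h | h <;> simpa [h] using hqC' z hz

lemma variation_univ_lt_of_variation_sub_lt {V : Type*} [NormedAddCommGroup V]
    {μ μ₀ : VectorMeasure X V} (hC : MeasurableSet C) (hμ₀ : μ₀.variation Cᶜ = 0)
    (hμ : μ.variation C ≠ ∞) (h : (μ - μ₀).variation C < (μ - μ₀).variation Cᶜ) :
    μ₀.variation Set.univ < μ.variation Set.univ :=
  calc μ₀.variation Set.univ = μ₀.variation C := by
        rw [← measure_add_measure_compl hC, hμ₀, add_zero]
    _ = (μ - (μ - μ₀)).variation C := by rw [sub_sub_cancel]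
    _ ≤ μ.variation C + (μ - μ₀).variation C := VectorMeasure.variation_sub_le C
    _ < μ.variation C + (μ - μ₀).variation Cᶜ := ENNReal.add_lt_add_left hμ h
    _ ≤ μ.variation C + (μ.variation Cᶜ + μ₀.variation Cᶜ) := by
        gcongr
        exact VectorMeasure.variation_sub_le Cᶜ
    _ = μ.variation Set.univ := by rw [hμ₀, add_zero, measure_add_measure_compl hC]

theorem dual_certificate_implies_unique_recovery_general (hC : MeasurableSet C)
    {S : Set (X → 𝕜)}
    (hcert : ∀ u : X → ℝ, Measurable u → (∀ z, u z = 1 ∨ u z = -1) →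
      ∃ q ∈ Submodule.span 𝕜 S, (∀ z ∈ C, q z = (u z : 𝕜)) ∧ ∀ z ∉ C, ‖q z‖ < 1)
    {μ μ₀ : SignedMeasure X} (hμ₀ : μ₀.variation Cᶜ = 0)
    (hint : ∀ f ∈ S, μ.Integrable f ∧ μ₀.Integrable f)
    (hmom : ∀ f ∈ S, ∫ᵛ z, f z ∂<•μ = ∫ᵛ z, f z ∂<•μ₀) (hne : μ ≠ μ₀) :
    μ₀.variation Set.univ < μ.variation Set.univ := by
  refine variation_univ_lt_of_variation_sub_lt hC hμ₀ (measure_ne_top _ _)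
    (variation_lt_variation_compl (sub_ne_zero.mpr hne) hC (fun f hf => ?_) hcert)
  obtain ⟨hμf, hμ₀f⟩ := hint f hf
  refine ⟨hμf.sub_vectorMeasure hμ₀f, ?_⟩
  rw [VectorMeasure.integral_sub_vectorMeasure hμf hμ₀f, hmom f hf, sub_self]

end NullSpace

section WignerContinuity

open Polynomial in
lemma iteratedDeriv_polynomial_eval (p : ℝ[X]) (n : ℕ) :
    iteratedDeriv n (fun t => p.eval t) = fun t => (derivative^[n] p).eval t := by
  induction n with
  | zero => simp
  | succ n ih =>
    rw [iteratedDeriv_succ, ih, Function.iterate_succ_apply']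
    exact funext fun t => Polynomial.deriv _

open Polynomial in
lemma exists_iteratedDeriv_eq_mul (a b n : ℕ) : ∃ r : ℝ[X],
    iteratedDeriv n (fun u : ℝ => (1 - u) ^ a * (1 + u) ^ b) =
      fun t => (1 - t) ^ (a - n) * (1 + t) ^ (b - n) * r.eval t := by
  have hcop : IsCoprime (1 - X : ℝ[X]) (1 + X) := by
    refine ⟨C (1 / 2), C (1 / 2), ?_⟩
    rw [← mul_add, show (1 - X + (1 + X) : ℝ[X]) = C 2 by rw [map_ofNat]; ring, ← C_mul]
    norm_num
  let p : ℝ[X] := (1 - X) ^ a * (1 + X) ^ b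
  have hsub : (1 - X) ^ (a - n) ∣ derivative^[n] p :=
    pow_sub_dvd_iterate_derivative_of_pow_dvd n (dvd_mul_right _ _)
  have hadd : (1 + X) ^ (b - n) ∣ derivative^[n] p :=
    pow_sub_dvd_iterate_derivative_of_pow_dvd n (dvd_mul_left _ _)
  obtain ⟨r, hr⟩ := hcop.pow.mul_dvd hsub hadd
  refine ⟨r, ?_⟩
  have hp := iteratedDeriv_polynomial_eval p n
  rw [hr] at hp
  simpa [p] using hp

lemma cpow_neg_half_mul_pow_toNat (s : ℤ) {y : ℝ} (hy : 0 ≤ y) :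
    (y : ℂ) ^ (-(s : ℂ) / 2) * (y : ℂ) ^ s.toNat = ((y ^ (|(s : ℝ)| / 2) : ℝ) : ℂ) := by
  have hs : (-(s : ℝ) / 2) + (s.toNat : ℝ) = |(s : ℝ)| / 2 := by
    have : (2 * s.toNat : ℝ) = s + |(s : ℝ)| := by
      exact_mod_cast (by rcases abs_cases s with h | h <;> lia : (2 * s.toNat : ℤ) = s + |s|)
    linarith
  -- At `y = 0` only `s = 0` survives: `0 ^ w = 0` for every exponent `w ≠ 0`, negative or not.
  rcases hy.eq_or_lt with rfl | hy
  · rcases eq_or_ne s 0 with rfl | h0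
    · simp
    · have hs0 : |(s : ℝ)| / 2 ≠ 0 := by positivity
      rw [Real.zero_rpow hs0, Complex.ofReal_zero, Complex.zero_cpow (by simpa using h0), zero_mul]
  · rw [← hs, Real.rpow_add hy, Real.rpow_natCast]
    push_cast [Complex.ofReal_cpow hy.le]
    rfl

lemma exists_wignerP_eq {l : ℕ} {k m : ℤ} (hk : -(l : ℤ) ≤ k) (hkl : k ≤ l) (hml : m ≤ l) :
    ∃ r : Polynomial ℝ, ∀ t ∈ Set.Icc (-1 : ℝ) 1, wignerP l k m t = wignerC l k m *
      (((1 - t) ^ (|((m - k : ℤ) : ℝ)| / 2) : ℝ) * ((1 + t) ^ (|((m + k : ℤ) : ℝ)| / 2) : ℝ) *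
        (r.eval t : ℝ)) := by
  obtain ⟨r, hr⟩ := exists_iteratedDeriv_eq_mul ((l : ℤ) - k).toNat ((l : ℤ) + k).toNat
    ((l : ℤ) - m).toNat
  have ha : ((l : ℤ) - k).toNat - ((l : ℤ) - m).toNat = (m - k).toNat := by lia
  have hb : ((l : ℤ) + k).toNat - ((l : ℤ) - m).toNat = (m + k).toNat := by lia
  rw [ha, hb] at hr
  refine ⟨r, fun t ht => ?_⟩
  have h1 := cpow_neg_half_mul_pow_toNat (m - k) (sub_nonneg.mpr ht.2)
  have h2 := cpow_neg_half_mul_pow_toNat (m + k) (neg_le_iff_add_nonneg'.mp ht.1)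
  rw [wignerP, hr, ← h1, ← h2]
  push_cast
  ring

lemma continuousOn_wignerP {l : ℕ} {k m : ℤ} (hk : -(l : ℤ) ≤ k) (hkl : k ≤ l) (hml : m ≤ l) :
    ContinuousOn (wignerP l k m) (Set.Icc (-1) 1) := by
  obtain ⟨r, hr⟩ := exists_wignerP_eq hk hkl hml
  have h1 : Continuous fun t : ℝ => (1 - t) ^ (|((m - k : ℤ) : ℝ)| / 2) :=
    (continuous_const.sub continuous_id).rpow_const fun _ => .inr (by positivity)
  have h2 : Continuous fun t : ℝ => (1 + t) ^ (|((m + k : ℤ) : ℝ)| / 2) :=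
    (continuous_const.add continuous_id).rpow_const fun _ => .inr (by positivity)
  refine ContinuousOn.congr (Continuous.continuousOn ?_) hr
  have := r.continuous
  fun_prop

lemma continuous_wignerDFormula {l : ℕ} {k m : ℤ} (hk : -(l : ℤ) ≤ k) (hkl : k ≤ l)
    (hml : m ≤ l) : Continuous fun p : ℝ × ℝ × ℝ => wignerDFormula l k m p.1 p.2.1 p.2.2 := by
  have hP : Continuous fun β : ℝ => wignerP l k m (Real.cos β) :=
    (continuousOn_wignerP hk hkl hml).comp_continuous Real.continuous_cos
      Real.cos_mem_Icc
  have hP' : Continuous fun p : ℝ × ℝ × ℝ => wignerP l k m (Real.cos p.2.1) :=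
    hP.comp (continuous_fst.comp continuous_snd)
  unfold wignerDFormula
  fun_prop

end WignerContinuity

section Euler

open Matrix

lemma IsSO3.mul {x y : Mat3} (hx : IsSO3 x) (hy : IsSO3 y) : IsSO3 (x * y) := by
  refine ⟨?_, by rw [det_mul, hx.2, hy.2, one_mul]⟩
  rw [transpose_mul, Matrix.mul_assoc, ← Matrix.mul_assoc xᵀ, hx.1, Matrix.one_mul, hy.1]

lemma IsSO3.mul_transpose {x : Mat3} (hx : IsSO3 x) : x * xᵀ = 1 :=
  mul_eq_one_comm.mp hx.1

lemma IsSO3.transpose {x : Mat3} (hx : IsSO3 x) : IsSO3 xᵀ :=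
  ⟨by rw [transpose_transpose, hx.mul_transpose], by rw [det_transpose, hx.2]⟩

lemma isSO3_Rz (t : ℝ) : IsSO3 (Rz t) := by
  constructor
  · ext i j
    fin_cases i <;> fin_cases j <;> simp [Rz, mul_apply, Fin.sum_univ_three, ← sq, mul_comm]
  · simp [Rz, det_fin_three, ← sq]

lemma isSO3_Rx (t : ℝ) : IsSO3 (Rx t) := by
  constructor
  · ext i j
    fin_cases i <;> fin_cases j <;> simp [Rx, mul_apply, Fin.sum_univ_three, ← sq, mul_comm]
  · simp [Rx, det_fin_three, ← sq]

lemma exists_polar_coordinates {a b s : ℝ} (hs : 0 ≤ s) (h : a ^ 2 + b ^ 2 = s ^ 2) :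
    ∃ θ ∈ Set.Icc (-Real.pi) Real.pi, a = s * Real.cos θ ∧ b = s * Real.sin θ := by
  let w : ℂ := ⟨a, b⟩
  have hw : ‖w‖ = s := by
    rw [Complex.norm_eq_sqrt_sq_add_sq, h, Real.sqrt_sq hs]
  exact ⟨w.arg, Set.Ioc_subset_Icc_self w.arg_mem_Ioc, by rw [← hw, w.norm_mul_cos_arg],
    by rw [← hw, w.norm_mul_sin_arg]⟩

lemma Rz_mul_Rx_mulVec_single (α β : ℝ) : (Rz α * Rx β) *ᵥ Pi.single 2 1 =
    ![Real.sin β * Real.sin α, -(Real.sin β * Real.cos α), Real.cos β] := by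
  ext i
  fin_cases i <;> simp [Rz, Rx, mul_comm]

lemma exists_Rz_mul_Rx_mulVec_eq {v : Fin 3 → ℝ} (hv : v ⬝ᵥ v = 1) :
    ∃ α ∈ Set.Icc (-Real.pi) Real.pi, ∃ β ∈ Set.Icc 0 Real.pi,
      (Rz α * Rx β) *ᵥ Pi.single 2 1 = v := by
  have hsum : v 0 ^ 2 + v 1 ^ 2 + v 2 ^ 2 = 1 := by
    simpa only [dotProduct, Fin.sum_univ_three, ← sq] using hv
  have hv2 : |v 2| ≤ 1 := (sq_le_one_iff_abs_le_one _).mp (by nlinarith)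
  have hsq : 1 - v 2 ^ 2 = √(1 - v 2 ^ 2) ^ 2 := (Real.sq_sqrt (by nlinarith)).symm
  obtain ⟨α, hα, h1, h0⟩ := exists_polar_coordinates (a := -v 1) (b := v 0)
    (Real.sqrt_nonneg (1 - v 2 ^ 2)) (by linarith)
  refine ⟨α, hα, Real.arccos (v 2), ⟨Real.arccos_nonneg _, Real.arccos_le_pi _⟩, ?_⟩
  rw [← Real.sin_arccos] at h0 h1
  rw [Rz_mul_Rx_mulVec_single, ← h0, ← h1, neg_neg,
    Real.cos_arccos (neg_le_of_abs_le hv2) (le_of_abs_le hv2)]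
  exact FinVec.etaExpand_eq v

lemma IsSO3.exists_eq_Rz {y : Mat3} (hy : IsSO3 y) (hfix : y *ᵥ Pi.single 2 1 = Pi.single 2 1) :
    ∃ γ ∈ Set.Icc (-Real.pi) Real.pi, y = Rz γ := by
  have h02 : y 0 2 = 0 := by simpa using congrFun hfix 0
  have h12 : y 1 2 = 0 := by simpa using congrFun hfix 1
  have h22 : y 2 2 = 1 := by simpa using congrFun hfix 2
  have horth (i j : Fin 3) : y 0 i * y 0 j + y 1 i * y 1 j + y 2 i * y 2 j =
      (1 : Mat3) i j := by
    rw [← hy.1, mul_apply, Fin.sum_univ_three]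
    rfl
  have h20 : y 2 0 = 0 := by simpa [h02, h12, h22] using horth 0 2
  have h21 : y 2 1 = 0 := by simpa [h02, h12, h22] using horth 1 2
  have h00 : y 0 0 ^ 2 + y 1 0 ^ 2 = 1 := by simpa [h20, ← sq] using horth 0 0
  have h11 : y 0 1 ^ 2 + y 1 1 ^ 2 = 1 := by simpa [h21, ← sq] using horth 1 1
  have hdet : y 0 0 * y 1 1 - y 0 1 * y 1 0 = 1 := by
    simpa [det_fin_three, h02, h12, h20, h21, h22] using hy.2
  have hrot : (y 1 1 - y 0 0) ^ 2 + (y 0 1 + y 1 0) ^ 2 = 0 := by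
    linear_combination h00 + h11 - 2 * hdet
  obtain ⟨hdiag, hoff⟩ := (add_eq_zero_iff_of_nonneg (sq_nonneg _) (sq_nonneg _)).mp hrot
  rw [sq_eq_zero_iff, sub_eq_zero] at hdiag
  rw [sq_eq_zero_iff, add_eq_zero_iff_eq_neg] at hoff
  obtain ⟨γ, hγ, hcos, hsin⟩ := exists_polar_coordinates zero_le_one (h00.trans (one_pow 2).symm)
  rw [one_mul] at hcos hsin
  refine ⟨γ, hγ, ?_⟩
  rw [eta_fin_three y, Rz, h02, h12, h20, h21, h22, hdiag, hoff, hcos, hsin]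

lemma IsSO3.exists_eq_Rz_mul_Rx_mul_Rz {x : Mat3} (hx : IsSO3 x) :
    ∃ α ∈ Set.Icc (-Real.pi) Real.pi, ∃ β ∈ Set.Icc 0 Real.pi,
      ∃ γ ∈ Set.Icc (-Real.pi) Real.pi, x = Rz α * Rx β * Rz γ := by
  have hunit : (x *ᵥ Pi.single 2 1) ⬝ᵥ (x *ᵥ Pi.single 2 1) = 1 := by
    rw [dotProduct_mulVec, ← mulVec_transpose, mulVec_mulVec, hx.1, one_mulVec,
      single_one_dotProduct, Pi.single_eq_same]
  obtain ⟨α, hα, β, hβ, hw⟩ := exists_Rz_mul_Rx_mulVec_eq hunit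
  have hwSO : IsSO3 (Rz α * Rx β) := (isSO3_Rz α).mul (isSO3_Rx β)
  obtain ⟨γ, hγ, hy⟩ := (hwSO.transpose.mul hx).exists_eq_Rz (by
    rw [← mulVec_mulVec, ← hw, mulVec_mulVec, hwSO.1, one_mulVec])
  refine ⟨α, hα, β, hβ, γ, hγ, ?_⟩
  rw [← hy, ← Matrix.mul_assoc, hwSO.mul_transpose, Matrix.one_mul]

end Euler

section SO3

instance : T2Space SO3 := inferInstanceAs (T2Space {x : Mat3 // IsSO3 x})

instance : BorelSpace SO3 := ⟨rfl⟩

/-- The compact parameter domain `[-π, π] × [0, π] × [-π, π]` of the Euler angles `(α, β, γ)`. The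
angles `α` and `γ` run over closed intervals to make it compact, at the cost of injectivity. -/
def eulerBox : Set (ℝ × ℝ × ℝ) :=
  Set.Icc (-Real.pi) Real.pi ×ˢ Set.Icc 0 Real.pi ×ˢ Set.Icc (-Real.pi) Real.pi

/-- The Euler angle parametrization `(α, β, γ) ↦ R_Z(α) R_X(β) R_Z(γ)` of `SO(3)`. -/
def eulerRotation (p : eulerBox) : SO3 :=
  ⟨Rz p.1.1 * Rx p.1.2.1 * Rz p.1.2.2, ((isSO3_Rz _).mul (isSO3_Rx _)).mul (isSO3_Rz _)⟩

instance : CompactSpace eulerBox :=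
  isCompact_iff_compactSpace.mp (isCompact_Icc.prod (isCompact_Icc.prod isCompact_Icc))

lemma continuous_Rz : Continuous Rz := by
  unfold Rz
  fun_prop

lemma continuous_Rx : Continuous Rx := by
  unfold Rx
  fun_prop

lemma continuous_eulerRotation : Continuous eulerRotation := by
  have := continuous_Rz
  have := continuous_Rx
  exact Continuous.subtype_mk (by fun_prop) _

lemma surjective_eulerRotation : Function.Surjective eulerRotation := by
  rintro ⟨x, hx⟩
  obtain ⟨α, hα, β, hβ, γ, hγ, rfl⟩ := hx.exists_eq_Rz_mul_Rx_mul_Rz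
  exact ⟨⟨(α, β, γ), hα, hβ, hγ⟩, rfl⟩

instance : CompactSpace SO3 :=
  surjective_eulerRotation.compactSpace continuous_eulerRotation

lemma isQuotientMap_eulerRotation : Topology.IsQuotientMap eulerRotation :=
  continuous_eulerRotation.isClosedMap.isQuotientMap continuous_eulerRotation
    surjective_eulerRotation

variable {D : ℕ → ℤ → ℤ → Mat3 → ℂ} {l : ℕ} {k m : ℤ}

lemma IsWignerFamily.continuous (hD : IsWignerFamily D) (hk : -(l : ℤ) ≤ k) (hkl : k ≤ l)
    (hm : -(l : ℤ) ≤ m) (hml : m ≤ l) : Continuous fun z : SO3 => D l k m z := by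
  rw [isQuotientMap_eulerRotation.continuous_iff]
  refine ((continuous_wignerDFormula hk hkl hml).comp continuous_subtype_val).congr fun p => ?_
  exact (hD l k m hk hkl hm hml _ _ _ p.2.2.1.1 p.2.2.1.2).symm

/-- The Wigner functions `D^l_{k,m}` of degree `l ≤ N` on `SO(3)`, whose complex span is the space
`Π_N` of generalized polynomials. Since `D` is a family of functions on matrices, indexed by all
integers `k`, `m`, its members are restricted to `SO(3)` and to `|k|, |m| ≤ l`. -/
def wignerFunctions (D : ℕ → ℤ → ℤ → Mat3 → ℂ) (N : ℕ) : Set (SO3 → ℂ) :=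
  {f : SO3 → ℂ | ∃ (l : ℕ) (k m : ℤ), l ≤ N ∧ -(l : ℤ) ≤ k ∧ k ≤ l ∧ -(l : ℤ) ≤ m ∧ m ≤ l ∧
    f = fun z : SO3 => D l k m (z : Mat3)}

lemma IsWignerFamily.integrable (hD : IsWignerFamily D) {N : ℕ} {f : SO3 → ℂ}
    (hf : f ∈ wignerFunctions D N) (ρ : Measure SO3) [IsFiniteMeasure ρ] : Integrable f ρ := by
  obtain ⟨l, k, m, -, hk, hkl, hm, hml, rfl⟩ := hf
  exact (hD.continuous hk hkl hm hml).integrable_of_hasCompactSupport (.of_compactSpace _)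

end SO3

section Pairing

lemma pairSM_eq_integral {μ : SignedMeasure SO3} {f : SO3 → ℂ} (hf : μ.Integrable f) :
    pairSM μ f = ∫ᵛ z, f z ∂<•μ :=
  (integral_eq_integral_posPart_sub_integral_negPart hf).symm

lemma tvNorm_eq_variation (μ : SignedMeasure SO3) : tvNorm μ = μ.variation Set.univ := by
  rw [tvNorm, SignedMeasure.totalVariation_eq_variation]

lemma variation_sum_diracSM_compl_range {ι : Type*} [Fintype ι] (c : ι → ℝ) (x : ι → SO3) :
    (∑ i, c i • diracSM (x i)).variation (Set.range x)ᶜ = 0 := by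
  have hdirac (i : ι) : (c i • diracSM (x i)).variation (Set.range x)ᶜ = 0 := by
    simp [VectorMeasure.variation_smul, diracSM, (Set.finite_range x).measurableSet.compl]
  refine le_antisymm ((VectorMeasure.variation_finsetSum_le _ _ _).trans_eq ?_) zero_le
  simp only [Measure.finsetSum_apply, hdirac, Finset.sum_const_zero]

end Pairing

end

open MeasureTheory in
theorem dual_certificate_implies_unique_recovery
    (N : ℕ)
    (M : ℕ) (c : Fin M → ℝ) (hc : ∀ i, c i ≠ 0)
    (x : Fin M → SO3) (hinj : Function.Injective x)
    (D : ℕ → ℤ → ℤ → Mat3 → ℂ) (hD : IsWignerFamily D)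
    (hcert : ∀ u : Fin M → ℝ, (∀ i, u i = 1 ∨ u i = -1) →
      ∃ q : SO3 → ℂ,
        q ∈ Submodule.span ℂ {f : SO3 → ℂ |
            ∃ (l : ℕ) (k m : ℤ), l ≤ N ∧ -(l : ℤ) ≤ k ∧ k ≤ l ∧ -(l : ℤ) ≤ m ∧ m ≤ l ∧
              f = fun z : SO3 => D l k m (z : Mat3)} ∧
        (∀ i, q (x i) = (u i : ℂ)) ∧
        (∀ z : SO3, z ∉ Set.range x → ‖q z‖ < 1))
    (μ : SignedMeasure SO3)
    (hmom : ∀ l : ℕ, l ≤ N → ∀ k m : ℤ, -(l : ℤ) ≤ k → k ≤ l → -(l : ℤ) ≤ m → m ≤ l →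
      pairSM μ (fun z => D l k m (z : Mat3)) =
        pairSM (∑ i, c i • diracSM (x i)) (fun z => D l k m (z : Mat3)))
    (hne : μ ≠ ∑ i, c i • diracSM (x i)) :
    tvNorm (∑ i, c i • diracSM (x i)) < tvNorm μ := by
  rw [tvNorm_eq_variation, tvNorm_eq_variation]
  refine dual_certificate_implies_unique_recovery_general (S := wignerFunctions D N)
    (Set.finite_range x).measurableSet (fun u _ hu => ?_) (variation_sum_diracSM_compl_range c x)
    (fun f hf => ⟨hD.integrable hf _, hD.integrable hf _⟩) (fun f hf => ?_) hne
  · obtain ⟨q, hq, hqx, hqlt⟩ := hcert (u ∘ x) fun i => hu (x i)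
    exact ⟨q, hq, Set.forall_mem_range.mpr hqx, hqlt⟩
  · rw [← pairSM_eq_integral (hD.integrable hf _), ← pairSM_eq_integral (hD.integrable hf _)]
    obtain ⟨l, k, m, hl, hk, hkl, hm, hml, rfl⟩ := hf
    exact hmom l hl k m hk hkl hm hml
end

section
/- Let s be an even integer with s ≥ 2 and N ∈ ℕ. For all x,y ∈ SO(3) with ω(y⁻¹x) ∉ {0,π} and every n ∈ {1,2,3}: X_n^y σ_N(x,y) = −σ̃_N′(ω(y⁻¹x))·e_n(y⁻¹x) and X_n^x σ_N(x,y) = −X_n^y σ_N(x,y). Moreover X_n^y σ_N(x,x) = 0 for every x ∈ SO(3). -/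
noncomputable section

/-- generators of so(3) -/
def Lgen : Fin 3 → Mat3 :=
  ![!![0, 0, 0; 0, 0, -1; 0, 1, 0],
    !![0, 0, 1; 0, 0, 0; -1, 0, 0],
    !![0, -1, 0; 1, 0, 0; 0, 0, 0]]

/-- derivative in the first variable along generator `i` -/
def Xx (i : Fin 3) (f : Mat3 → Mat3 → ℝ) : Mat3 → Mat3 → ℝ :=
  fun x y => deriv (fun t : ℝ => f (x * NormedSpace.exp (t • Lgen i)) y) 0

/-- derivative in the second variable along generator `i` -/
def Xy (i : Fin 3) (f : Mat3 → Mat3 → ℝ) : Mat3 → Mat3 → ℝ :=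
  fun x y => deriv (fun t : ℝ => f x (y * NormedSpace.exp (t • Lgen i))) 0

/-- iterated integrals of the sign of the Chebyshev polynomial: the perfect B-spline chain -/
def fspline (s : ℕ) : ℕ → ℝ → ℝ
  | 0 => fun x => (-1 : ℝ) ^ (s - 1) * Real.sign ((Polynomial.Chebyshev.U ℝ ((s : ℤ) - 1)).eval x)
  | (k + 1) => fun x => ∫ t in (-1 : ℝ)..x, fspline s k t

/-- the scaled perfect B-spline g̃_{s-1} -/
def gtilde (s : ℕ) (x : ℝ) : ℝ := fspline s (s - 1) (2 * x)

/-- discrete norm ‖g̃‖_{1,N} -/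
def gnorm (s N : ℕ) : ℝ :=
  ∑ k ∈ Finset.Icc (-(N : ℤ)) (N : ℤ), gtilde s ((k : ℝ) / (2 * ((N : ℝ) + 1)))

/-- the trigonometric kernel σ̃_N (real-valued) -/
def sigmaT (s N : ℕ) (t : ℝ) : ℝ :=
  ((1 / (gnorm s N : ℂ)) *
      ∑ k ∈ Finset.Icc (-(N : ℤ)) (N : ℤ),
        (gtilde s ((k : ℝ) / (2 * ((N : ℝ) + 1))) : ℂ) * Complex.exp ((k : ℂ) * t * Complex.I)).re

/-- the zonal kernel σ_N on SO(3) -/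
def sigmaK (s N : ℕ) (x y : Mat3) : ℝ := sigmaT s N (rotAngle (y⁻¹ * x))

/-- rotation axis components -/
def axisComp : Fin 3 → Mat3 → ℝ :=
  ![fun x => (x 2 1 - x 1 2) / (2 * Real.sin (rotAngle x)),
    fun x => (x 0 2 - x 2 0) / (2 * Real.sin (rotAngle x)),
    fun x => (x 1 0 - x 0 1) / (2 * Real.sin (rotAngle x))]

/-- Levi-Civita symbol on `Fin 3` -/
def eps3 (a b c : Fin 3) : ℝ :=
  if (a, b, c) = (0, 1, 2) ∨ (a, b, c) = (1, 2, 0) ∨ (a, b, c) = (2, 0, 1) then 1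
  else if (a, b, c) = (2, 1, 0) ∨ (a, b, c) = (1, 0, 2) ∨ (a, b, c) = (0, 2, 1) then -1
  else 0

/-- constants c_{l,s} -/
def cConst : ℕ → ℕ → ℝ
  | 0, s => 1.02 * (Nat.factorial (s - 1)) * 2 ^ s * s
  | 1, s => 1.02 * (Nat.factorial (s - 1)) * 2 ^ s * (2 * s)
  | 2, s => 1.02 * (Nat.factorial (s - 1)) * 2 ^ s * (4 * s + 1)
  | _, s => 1.02 * (Nat.factorial (s - 1)) * 2 ^ s * (9 * s - 2)

/-- ζ(m) for natural m -/
def zetaNat (m : ℕ) : ℝ := ∑' n : ℕ, (1 : ℝ) / ((n : ℝ) + 1) ^ m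

/-- constants C_{i,s} = 124 c_{i,s} ζ(s-2) -/
def CConst (i s : ℕ) : ℝ := 124 * cConst i s * zetaNat (s - 2)

end

open scoped Real

/-!
Along `t ↦ z * exp (t • Lₙ)` the trace has derivative `tr (z Lₙ) = -2 sin ω(z) eₙ(z)` at `0`, which
the derivative of `arccos` turns into `ω' = eₙ(z)`; this is the formula for `Xₙˣ`. Moving along the
one-parameter subgroup in the second variable amounts to moving backwards in the first, because
the angle depends on the trace alone, so `Xₙʸ = -Xₙˣ`. On the diagonal `ω` is not differentiable:
Rodrigues' formula gives `ω(exp (t • Lₙ)) = |t|`, and the kernel is smooth there only because its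
profile is even.
-/

open NormedSpace (exp)

section BanachAlgebra

variable {𝔸 : Type*} [NormedRing 𝔸] [NormedAlgebra ℝ 𝔸] [CompleteSpace 𝔸]

theorem eq_mul_exp_smul_of_hasDerivAt {R : ℝ → 𝔸} {A : 𝔸}
    (hR : ∀ t, HasDerivAt R (R t * A) t) (t : ℝ) : R t = R 0 * exp (t • A) := by
  have hconst : R t * exp (t • -A) = R 0 * exp ((0 : ℝ) • -A) := by
    have hderiv (u : ℝ) : HasDerivAt (fun u ↦ R u * exp (u • -A)) 0 u :=
      ((hR u).mul (hasDerivAt_exp_smul_const' (𝕂 := ℝ) (-A) u)).congr_deriv (by noncomm_ring)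
    exact is_const_of_deriv_eq_zero (fun u ↦ (hderiv u).differentiableAt)
      (fun u ↦ (hderiv u).deriv) t 0
  have hinv : exp (t • -A) * exp (t • A) = 1 := by
    let +nondep : NormedAlgebra ℚ 𝔸 := .restrictScalars ℚ ℝ 𝔸
    rw [← NormedSpace.exp_add_of_commute (((Commute.refl A).neg_left.smul_left t).smul_right t),
      smul_neg, neg_add_cancel, NormedSpace.exp_zero]
  rw [zero_smul, NormedSpace.exp_zero, mul_one] at hconst
  rw [← hconst, mul_assoc, hinv, mul_one]

/-- Rodrigues' rotation formula. -/
theorem exp_smul_eq_of_pow_three_eq_neg {A : 𝔸} (hA : A ^ 3 = -A) (t : ℝ) :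
    exp (t • A) = 1 + Real.sin t • A + (1 - Real.cos t) • A ^ 2 := by
  set R : ℝ → 𝔸 := fun u ↦ 1 + Real.sin u • A + (1 - Real.cos u) • A ^ 2 with hRdef
  have hR (u : ℝ) : HasDerivAt R (R u * A) u := by
    have hderiv : HasDerivAt R (Real.cos u • A + Real.sin u • A ^ 2) u := by
      simpa only [neg_neg] using (((Real.hasDerivAt_sin u).smul_const A).const_add 1).fun_add
        (((Real.hasDerivAt_cos u).const_sub 1).smul_const (A ^ 2))
    refine hderiv.congr_deriv ?_
    simp only [hRdef, add_mul, one_mul, smul_mul_assoc, ← sq, ← pow_succ, Nat.reduceAdd, hA]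
    module
  have hR0 : R 0 = 1 := by simp [hRdef]
  have hsol := eq_mul_exp_smul_of_hasDerivAt hR t
  rw [hR0, one_mul] at hsol
  exact hsol.symm

end BanachAlgebra

attribute [local instance] Matrix.linftyOpNormedRing Matrix.linftyOpNormedAlgebra in
theorem hasDerivAt_trace_mul_exp_smul {m 𝕜 : Type*} [Fintype m] [DecidableEq m] [RCLike 𝕜]
    (z A : Matrix m m 𝕜) :
    HasDerivAt (fun t : 𝕜 ↦ (z * exp (t • A)).trace) (z * A).trace 0 := by
  have hexp : HasDerivAt (fun t : 𝕜 ↦ exp (t • A)) A 0 := by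
    have hexp0 := hasDerivAt_exp_smul_const (𝕂 := 𝕜) A 0
    rwa [zero_smul, NormedSpace.exp_zero, one_mul] at hexp0
  let φ := (Matrix.traceLinearMap m 𝕜 𝕜).comp (LinearMap.mulLeft 𝕜 z)
  exact (LinearMap.toContinuousLinearMap φ).hasFDerivAt.comp_hasDerivAt 0 hexp

theorem Lgen_pow_three (n : Fin 3) : Lgen n ^ 3 = -Lgen n := by
  fin_cases n <;> ext i j <;> fin_cases i <;> fin_cases j <;>
    simp [Lgen, pow_succ, Matrix.mul_apply, Fin.sum_univ_three]

theorem trace_Lgen (n : Fin 3) : (Lgen n).trace = 0 := by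
  fin_cases n <;> simp [Lgen, Matrix.trace_fin_three]

theorem trace_Lgen_sq (n : Fin 3) : (Lgen n ^ 2).trace = -2 := by
  fin_cases n <;> simp [Lgen, sq, Matrix.trace_fin_three] <;> norm_num

attribute [local instance] Matrix.linftyOpNormedRing Matrix.linftyOpNormedAlgebra in
theorem trace_exp_smul_Lgen (n : Fin 3) (t : ℝ) :
    (exp (t • Lgen n)).trace = 1 + 2 * Real.cos t := by
  have hexp := exp_smul_eq_of_pow_three_eq_neg (Lgen_pow_three n) t
  refine (congrArg Matrix.trace hexp).trans ?_
  simp only [Matrix.trace_add, Matrix.trace_smul, Matrix.trace_one, trace_Lgen, trace_Lgen_sq,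
    Fintype.card_fin, smul_eq_mul]
  ring

theorem rotAngle_mul_comm (x y : Mat3) : rotAngle (x * y) = rotAngle (y * x) := by
  rw [rotAngle, rotAngle, Matrix.trace_mul_comm]

theorem axisComp_eq_neg_trace_mul_Lgen_div (n : Fin 3) (z : Mat3) :
    axisComp n z = -((z * Lgen n).trace / (2 * Real.sin (rotAngle z))) := by
  rw [← neg_div]
  fin_cases n <;>
    simp [axisComp, Lgen, Matrix.trace_fin_three, Matrix.mul_apply, Fin.sum_univ_three,
      sub_eq_add_neg, add_comm]

theorem hasDerivAt_rotAngle_comp {c : ℝ → Mat3} {d t : ℝ}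
    (hc : HasDerivAt (fun u ↦ (c u).trace) d t)
    (h0 : rotAngle (c t) ≠ 0) (hπ : rotAngle (c t) ≠ π) :
    HasDerivAt (fun u ↦ rotAngle (c u)) (-(d / (2 * Real.sin (rotAngle (c t))))) t := by
  have hne_one : ((c t).trace - 1) / 2 ≠ 1 := fun h ↦ h0 (by rw [rotAngle, h, Real.arccos_one])
  have hne_neg_one : ((c t).trace - 1) / 2 ≠ -1 :=
    fun h ↦ hπ (by rw [rotAngle, h, Real.arccos_neg_one])
  refine ((Real.hasDerivAt_arccos hne_neg_one hne_one).comp t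
    ((hc.sub_const 1).div_const 2)).congr_deriv ?_
  rw [rotAngle, Real.sin_arccos]
  ring

theorem hasDerivAt_rotAngle_mul_exp_smul_Lgen {z : Mat3} (h0 : rotAngle z ≠ 0)
    (hπ : rotAngle z ≠ π) (n : Fin 3) :
    HasDerivAt (fun t : ℝ ↦ rotAngle (z * exp (t • Lgen n))) (axisComp n z) 0 := by
  have hz : z * exp ((0 : ℝ) • Lgen n) = z := by
    rw [zero_smul, NormedSpace.exp_zero, mul_one]
  have hω := hasDerivAt_rotAngle_comp (hasDerivAt_trace_mul_exp_smul z (Lgen n))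
    (by rwa [hz]) (by rwa [hz])
  rwa [hz, ← axisComp_eq_neg_trace_mul_Lgen_div] at hω

theorem rotAngle_exp_smul_Lgen (n : Fin 3) {t : ℝ} (ht : |t| ≤ π) :
    rotAngle (exp (t • Lgen n)) = |t| := by
  rw [rotAngle, trace_exp_smul_Lgen, add_sub_cancel_left, mul_div_cancel_left₀ _ two_ne_zero,
    ← Real.cos_abs, Real.arccos_cos (abs_nonneg t) ht]

/-- The zonal kernel `(x, y) ↦ g (ω (y⁻¹ x))` with profile `g`; `sigmaK s N` is the one with profile
`sigmaT s N`. It is defined for all matrices, like `rotAngle`. -/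
noncomputable def zonalKernel (g : ℝ → ℝ) (x y : Mat3) : ℝ := g (rotAngle (y⁻¹ * x))

theorem zonalKernel_mul_exp_right (g : ℝ → ℝ) (x y A : Mat3) :
    zonalKernel g x (y * exp A) = zonalKernel g (x * exp (-A)) y := by
  rw [zonalKernel, zonalKernel, Matrix.mul_inv_rev, ← Matrix.exp_neg, mul_assoc,
    rotAngle_mul_comm, mul_assoc]

theorem Xy_zonalKernel_eq_neg_Xx (g : ℝ → ℝ) (n : Fin 3) (x y : Mat3) :
    Xy n (zonalKernel g) x y = -Xx n (zonalKernel g) x y := by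
  simp only [Xy, Xx, zonalKernel_mul_exp_right, ← neg_smul]
  rw [deriv_comp_neg fun t : ℝ ↦ zonalKernel g (x * exp (t • Lgen n)) y, neg_zero]

theorem Xx_zonalKernel {g : ℝ → ℝ} {x y : Mat3} (hg : DifferentiableAt ℝ g (rotAngle (y⁻¹ * x)))
    (h0 : rotAngle (y⁻¹ * x) ≠ 0) (hπ : rotAngle (y⁻¹ * x) ≠ π) (n : Fin 3) :
    Xx n (zonalKernel g) x y = deriv g (rotAngle (y⁻¹ * x)) * axisComp n (y⁻¹ * x) := by
  have hω := hasDerivAt_rotAngle_mul_exp_smul_Lgen h0 hπ n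
  simp only [Xx, zonalKernel, ← mul_assoc]
  exact (hg.hasDerivAt.comp_of_eq 0 hω (by simp)).deriv

theorem hasDerivAt_zero_of_even {F : Type*} [NormedAddCommGroup F] [NormedSpace ℝ F] {g : ℝ → F}
    (hg_even : g.Even) (hg : DifferentiableAt ℝ g 0) : HasDerivAt g 0 0 := by
  have hneg : deriv g 0 = -deriv g 0 := by
    simpa only [hg_even.eq, neg_zero] using deriv_comp_neg g 0
  have : IsAddTorsionFree F := .of_isTorsionFree ℝ F
  exact hg.hasDerivAt.congr_deriv (self_eq_neg.mp hneg)

theorem hasDerivAt_zonalKernel_self {g : ℝ → ℝ} (hg_even : g.Even) (hg : DifferentiableAt ℝ g 0)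
    {x : Mat3} (hx : IsUnit x) (n : Fin 3) :
    HasDerivAt (fun t : ℝ ↦ zonalKernel g (x * exp (t • Lgen n)) x) 0 0 := by
  refine (hasDerivAt_zero_of_even hg_even hg).congr_of_eventuallyEq ?_
  filter_upwards [Metric.closedBall_mem_nhds (0 : ℝ) Real.pi_pos] with t ht
  have hπ : |t| ≤ π := by simpa using ht
  rw [zonalKernel, Matrix.nonsing_inv_mul_cancel_left _ _ ((Matrix.isUnit_iff_isUnit_det x).1 hx),
    rotAngle_exp_smul_Lgen n hπ]
  exact abs_by_cases (g · = g t) rfl (hg_even t)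

theorem sigmaT_eq_sum_cos (s N : ℕ) (t : ℝ) :
    sigmaT s N t = 1 / gnorm s N * ∑ k ∈ Finset.Icc (-(N : ℤ)) (N : ℤ),
      gtilde s ((k : ℝ) / (2 * ((N : ℝ) + 1))) * Real.cos (k * t) := by
  rw [sigmaT, ← Complex.ofReal_one, ← Complex.ofReal_div, Complex.re_ofReal_mul, Complex.re_sum]
  congr! 2 with k
  rw [Complex.re_ofReal_mul]
  congr 1
  exact_mod_cast Complex.exp_ofReal_mul_I_re (k * t)

theorem differentiable_sigmaT (s N : ℕ) : Differentiable ℝ (sigmaT s N) := by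
  rw [funext (sigmaT_eq_sum_cos s N)]
  fun_prop

theorem even_sigmaT (s N : ℕ) : (sigmaT s N).Even := fun t ↦ by
  simp only [sigmaT_eq_sum_cos, mul_neg, Real.cos_neg]

theorem IsSO3.isUnit {x : Mat3} (hx : IsSO3 x) : IsUnit x :=
  (Matrix.isUnit_iff_isUnit_det x).2 (hx.2 ▸ isUnit_one)

theorem first_derivative_kernel_formula_general {g : ℝ → ℝ} (hg : Differentiable ℝ g)
    (hg_even : g.Even) :
    (∀ (x : Mat3) (y : GL (Fin 3) ℝ),
      rotAngle ((y : Mat3)⁻¹ * x) ≠ 0 → rotAngle ((y : Mat3)⁻¹ * x) ≠ π →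
      ∀ n : Fin 3,
        Xy n (zonalKernel g) x y
          = -(deriv g (rotAngle ((y : Mat3)⁻¹ * x))) * axisComp n ((y : Mat3)⁻¹ * x) ∧
        Xx n (zonalKernel g) x y = -(Xy n (zonalKernel g) x y)) ∧
    (∀ (x : GL (Fin 3) ℝ) (n : Fin 3), Xy n (zonalKernel g) x x = 0) := by
  refine ⟨fun x y h0 hπ n ↦ ⟨?_, ?_⟩, fun x n ↦ ?_⟩
  · rw [Xy_zonalKernel_eq_neg_Xx, Xx_zonalKernel (hg _) h0 hπ, neg_mul]
  · rw [Xy_zonalKernel_eq_neg_Xx, neg_neg]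
  · rw [Xy_zonalKernel_eq_neg_Xx, Xx, (hasDerivAt_zonalKernel_self hg_even (hg 0) x.isUnit n).deriv,
      neg_zero]

theorem first_derivative_kernel_formula
    (s N : ℕ) (hs_even : Even s) (hs : 2 ≤ s) :
    (∀ x y : Mat3, IsSO3 x → IsSO3 y →
      rotAngle (y⁻¹ * x) ≠ 0 → rotAngle (y⁻¹ * x) ≠ π →
      ∀ n : Fin 3,
        Xy n (sigmaK s N) x y
          = -(deriv (sigmaT s N) (rotAngle (y⁻¹ * x))) * axisComp n (y⁻¹ * x) ∧
        Xx n (sigmaK s N) x y = -(Xy n (sigmaK s N) x y)) ∧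
    (∀ x : Mat3, IsSO3 x → ∀ n : Fin 3, Xy n (sigmaK s N) x x = 0) := by
  obtain ⟨hoff, hdiag⟩ :=
    first_derivative_kernel_formula_general (differentiable_sigmaT s N) (even_sigmaT s N)
  exact ⟨fun x _ _ hy ↦ hoff x hy.isUnit.unit, fun _ hx ↦ hdiag hx.isUnit.unit⟩
end

section
/- Let x,y ∈ SO(3) with ω(y⁻¹x) ∉ {0,π}, write ω = ω(y⁻¹x) and e_k = e_k(y⁻¹x), and for i,j ∈ {1,2,3} let X_j^x e_i denote the derivative at t = 0 of t ↦ e_i(y⁻¹·x·e^{tL_j}). Then for i,j,n pairwise distinct: X_j^x e_i = −e_i e_j·(1+cos ω)/(2 sin ω) + (ε_{jin}/2)·e_n, and for equal indices: X_i^x e_i = (1+cos ω)/(2 sin ω)·(1 − e_i²). -/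
open scoped Real

/-- derivative of an axis-component kernel in the first variable along generator `j` -/
noncomputable def XxAxis (j i : Fin 3) (x y : Mat3) : ℝ :=
  deriv (fun t : ℝ => axisComp i (y⁻¹ * (x * NormedSpace.exp (t • Lgen j)))) 0

/-
Rodrigues' formula `z = cos ω + (1 - cos ω) e eᵀ + sin ω [e]ₓ` of `z ∈ SO(3)` gives the
derivative of the axial vector `2 sin ω • e` along `t ↦ z exp (t [v]ₓ)`, and the trace gives
`dω/dt = e · v`. The quotient rule then yields
`de/dt = (1 + cos ω) / (2 sin ω) • (v - (e · v) e) + ½ e × v`.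
Rodrigues' formula itself is Cayley–Hamilton: since `adj z = zᵀ`, it expresses `z²`, hence
`[a]ₓ² = (z - zᵀ)²` and with it `a aᵀ`, through `z`, `zᵀ` and `tr z`.
-/

open scoped Matrix

section CrossMatrix

variable {R : Type*} [CommRing R]

/-- The skew-symmetric matrix `[v]ₓ` of the linear map `w ↦ v ⨯₃ w`. -/
def crossMatrix (v : Fin 3 → R) : Matrix (Fin 3) (Fin 3) R :=
  !![0, -v 2, v 1; v 2, 0, -v 0; -v 1, v 0, 0]

/-- The axial vector of a matrix: the vector `a` with `A - Aᵀ = [a]ₓ`. It is not halved, so that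
it makes sense over every commutative ring. -/
def axialVec : Matrix (Fin 3) (Fin 3) R →ₗ[R] Fin 3 → R where
  toFun A := ![A 2 1 - A 1 2, A 0 2 - A 2 0, A 1 0 - A 0 1]
  map_add' A B := by
    ext i
    fin_cases i <;> simp <;> ring
  map_smul' c A := by
    ext i
    fin_cases i <;> simp [mul_sub]

theorem axialVec_apply (A : Matrix (Fin 3) (Fin 3) R) :
    axialVec A = ![A 2 1 - A 1 2, A 0 2 - A 2 0, A 1 0 - A 0 1] :=
  rfl

theorem crossMatrix_axialVec (A : Matrix (Fin 3) (Fin 3) R) :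
    crossMatrix (axialVec A) = A - Aᵀ := by
  ext i j
  fin_cases i <;> fin_cases j <;> simp [crossMatrix, axialVec_apply]

theorem crossMatrix_smul (c : R) (v : Fin 3 → R) : crossMatrix (c • v) = c • crossMatrix v := by
  simp [crossMatrix]

theorem vecMul_crossMatrix (v w : Fin 3 → R) : v ᵥ* crossMatrix w = v ⨯₃ w := by
  ext i
  fin_cases i <;> simp [crossMatrix, cross_apply, Matrix.vecMul, dotProduct, Fin.sum_univ_three]
    <;> ring

theorem crossMatrix_mul_self (v : Fin 3 → R) :
    crossMatrix v * crossMatrix v = Matrix.vecMulVec v v - (v ⬝ᵥ v) • 1 := by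
  ext i j
  fin_cases i <;> fin_cases j <;>
    simp [crossMatrix, Matrix.mul_apply, Matrix.vecMulVec_apply, dotProduct, Fin.sum_univ_three]
    <;> ring

theorem trace_mul_crossMatrix (A : Matrix (Fin 3) (Fin 3) R) (v : Fin 3 → R) :
    (A * crossMatrix v).trace = -(axialVec A ⬝ᵥ v) := by
  simp only [crossMatrix, axialVec_apply, Matrix.trace_fin_three, Matrix.mul_apply, dotProduct,
    Fin.sum_univ_three, Matrix.of_apply, Matrix.cons_val]
  ring

theorem axialVec_mul_crossMatrix (A : Matrix (Fin 3) (Fin 3) R) (v : Fin 3 → R) :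
    axialVec (A * crossMatrix v) = A.trace • v - v ᵥ* A := by
  ext i
  fin_cases i <;>
    simp [crossMatrix, axialVec_apply, Matrix.trace_fin_three, Matrix.mul_apply, Matrix.vecMul,
      dotProduct, Fin.sum_univ_three] <;> ring

theorem cross_single_apply_self (w : Fin 3 → R) (i : Fin 3) : (w ⨯₃ Pi.single i 1) i = 0 := by
  simpa using dot_cross_self w (Pi.single i 1)

end CrossMatrix

section SpecialOrthogonal

variable {R : Type*} [CommRing R]

theorem adjugate_eq_transpose {n : Type*} [Fintype n] [DecidableEq n] {A : Matrix n n R}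
    (hA : Aᵀ * A = 1) (hdet : A.det = 1) : A.adjugate = Aᵀ := by
  rw [← Matrix.inv_eq_left_inv hA, Matrix.inv_def, hdet, Ring.inverse_one, one_smul]

theorem adjugate_fin_three_eq_mul_self_sub_add (A : Matrix (Fin 3) (Fin 3) R) :
    A.adjugate = A * A - A.trace • A + A.adjugate.trace • 1 := by
  rw [Matrix.adjugate_fin_three]
  ext i j
  fin_cases i <;> fin_cases j <;>
    simp [Matrix.trace_fin_three, Matrix.mul_apply, Fin.sum_univ_three] <;> ring

variable {A : Matrix (Fin 3) (Fin 3) R}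

theorem mul_self_eq_of_det_eq_one (hA : Aᵀ * A = 1) (hdet : A.det = 1) :
    A * A = A.trace • A - A.trace • 1 + Aᵀ := by
  have h := adjugate_fin_three_eq_mul_self_sub_add A
  rw [adjugate_eq_transpose hA hdet, Matrix.trace_transpose] at h
  rw [h]
  abel

theorem axialVec_dotProduct_self (hA : Aᵀ * A = 1) (hdet : A.det = 1) :
    axialVec A ⬝ᵥ axialVec A = (A.trace + 1) * (3 - A.trace) := by
  have h := trace_mul_crossMatrix A (axialVec A)
  rw [crossMatrix_axialVec, mul_sub, mul_eq_one_comm.mp hA, mul_self_eq_of_det_eq_one hA hdet] at h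
  simp only [Matrix.trace_sub, Matrix.trace_add, Matrix.trace_smul, Matrix.trace_one,
    Matrix.trace_transpose, Fintype.card_fin, smul_eq_mul] at h
  push_cast at h
  linear_combination h

theorem vecMulVec_axialVec_self (hA : Aᵀ * A = 1) (hdet : A.det = 1) :
    Matrix.vecMulVec (axialVec A) (axialVec A) =
      (A.trace + 1) • (A + Aᵀ) + (1 - A.trace ^ 2) • 1 := by
  have hsq := mul_self_eq_of_det_eq_one hA hdet
  have hsqT : Aᵀ * Aᵀ = A.trace • Aᵀ - A.trace • 1 + A := by
    simpa using congrArg Matrix.transpose hsq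
  calc Matrix.vecMulVec (axialVec A) (axialVec A)
      = (A - Aᵀ) * (A - Aᵀ) + (axialVec A ⬝ᵥ axialVec A) • 1 := by
        rw [← crossMatrix_axialVec, crossMatrix_mul_self, sub_add_cancel]
    _ = A * A + Aᵀ * Aᵀ - (2 : R) • 1 + ((A.trace + 1) * (3 - A.trace)) • 1 := by
        rw [axialVec_dotProduct_self hA hdet, sub_mul, mul_sub, mul_sub, hA,
          mul_eq_one_comm.mp hA]
        module
    _ = (A.trace + 1) • (A + Aᵀ) + (1 - A.trace ^ 2) • 1 := by
        rw [hsq, hsqT]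
        module

end SpecialOrthogonal

theorem IsSO3.inv_mul {x y : Mat3} (hx : IsSO3 x) (hy : IsSO3 y) : IsSO3 (y⁻¹ * x) := by
  rw [Matrix.inv_eq_left_inv hy.1]
  refine ⟨?_, by simp [hx.2, hy.2]⟩
  rw [Matrix.transpose_mul, Matrix.transpose_transpose, Matrix.mul_assoc,
    ← Matrix.mul_assoc y, mul_eq_one_comm.mp hy.1, Matrix.one_mul, hx.1]

/-- The rotation axis `e(z)` as a vector. Where `sin (rotAngle z) = 0` it is the junk value `0`. -/
noncomputable def rotAxis (z : Mat3) : Fin 3 → ℝ := fun i => axisComp i z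

theorem rotAxis_eq_smul_axialVec (z : Mat3) :
    rotAxis z = (2 * Real.sin (rotAngle z))⁻¹ • axialVec z := by
  ext i
  fin_cases i <;> simp [rotAxis, axisComp, axialVec_apply, div_eq_inv_mul]

theorem axialVec_eq_smul_rotAxis {z : Mat3} (hsin : Real.sin (rotAngle z) ≠ 0) :
    axialVec z = (2 * Real.sin (rotAngle z)) • rotAxis z := by
  rw [rotAxis_eq_smul_axialVec, smul_inv_smul₀ (mul_ne_zero two_ne_zero hsin)]

theorem sin_rotAngle_ne_zero {z : Mat3} (h0 : rotAngle z ≠ 0) (hpi : rotAngle z ≠ π) :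
    Real.sin (rotAngle z) ≠ 0 :=
  (Real.sin_pos_of_pos_of_lt_pi ((Real.arccos_nonneg _).lt_of_ne' h0)
    ((Real.arccos_le_pi _).lt_of_ne hpi)).ne'

theorem abs_trace_sub_one_div_two_lt_one {z : Mat3} (hsin : Real.sin (rotAngle z) ≠ 0) :
    |(z.trace - 1) / 2| < 1 := by
  rw [rotAngle, Real.sin_arccos, Real.sqrt_ne_zero', sub_pos] at hsin
  exact (sq_lt_one_iff_abs_lt_one _).mp hsin

theorem trace_eq_one_add_two_mul_cos_rotAngle {z : Mat3} (hsin : Real.sin (rotAngle z) ≠ 0) :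
    z.trace = 1 + 2 * Real.cos (rotAngle z) := by
  obtain ⟨hlow, hupp⟩ := abs_lt.mp (abs_trace_sub_one_div_two_lt_one hsin)
  rw [rotAngle, Real.cos_arccos hlow.le hupp.le]
  ring

theorem IsSO3.rodrigues_formula {z : Mat3} (hz : IsSO3 z) (hsin : Real.sin (rotAngle z) ≠ 0) :
    z = Real.cos (rotAngle z) • 1
      + (1 - Real.cos (rotAngle z)) • Matrix.vecMulVec (rotAxis z) (rotAxis z)
      + Real.sin (rotAngle z) • crossMatrix (rotAxis z) := by
  have hskew := crossMatrix_axialVec z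
  have hsymm := vecMulVec_axialVec_self hz.1 hz.2
  rw [axialVec_eq_smul_rotAxis hsin] at hskew hsymm
  rw [crossMatrix_smul] at hskew
  rw [Matrix.smul_vecMulVec, Matrix.vecMulVec_smul,
    trace_eq_one_add_two_mul_cos_rotAngle hsin] at hsymm
  have hpyth := Real.sin_sq_add_cos_sq (rotAngle z)
  have hcos : 1 + Real.cos (rotAngle z) ≠ 0 := fun h =>
    hsin (pow_eq_zero_iff two_ne_zero |>.mp (by linear_combination hpyth -
      (Real.cos (rotAngle z) - 1) * h))
  ext a b
  have hskew_ab := congrFun₂ hskew a b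
  have hsymm_ab := congrFun₂ hsymm a b
  simp only [Matrix.smul_apply, Matrix.add_apply, Matrix.sub_apply, Matrix.transpose_apply,
    smul_eq_mul] at hskew_ab hsymm_ab ⊢
  apply mul_left_cancel₀ hcos
  linear_combination (-(1 + Real.cos (rotAngle z)) / 2) * hskew_ab - hsymm_ab / 4
    + Matrix.vecMulVec (rotAxis z) (rotAxis z) a b * hpyth

theorem IsSO3.axialVec_mul_crossMatrix {z : Mat3} (hz : IsSO3 z)
    (hsin : Real.sin (rotAngle z) ≠ 0) (v : Fin 3 → ℝ) :
    axialVec (z * crossMatrix v) =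
      (1 + Real.cos (rotAngle z)) • v
        - ((1 - Real.cos (rotAngle z)) * (rotAxis z ⬝ᵥ v)) • rotAxis z
        + Real.sin (rotAngle z) • rotAxis z ⨯₃ v := by
  have hvecMul := congrArg (v ᵥ* ·) (hz.rodrigues_formula hsin)
  simp only [Matrix.vecMul_add, Matrix.vecMul_smul, Matrix.vecMul_one, Matrix.vecMul_vecMulVec,
    vecMul_crossMatrix, dotProduct_comm v, ← cross_anticomm (rotAxis z) v] at hvecMul
  rw [_root_.axialVec_mul_crossMatrix, hvecMul, trace_eq_one_add_two_mul_cos_rotAngle hsin]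
  module

section Derivatives

attribute [local instance] Matrix.linftyOpNormedRing Matrix.linftyOpNormedAlgebra

theorem hasDerivAt_linearMap_mul_exp_smul {𝕂 n E : Type*} [RCLike 𝕂] [Fintype n] [DecidableEq n]
    [NormedAddCommGroup E] [NormedSpace 𝕂 E] (f : Matrix n n 𝕂 →ₗ[𝕂] E) (z A : Matrix n n 𝕂) :
    HasDerivAt (fun t : 𝕂 => f (z * NormedSpace.exp (t • A))) (f (z * A)) 0 := by
  have h := (hasDerivAt_exp_smul_const (𝕂 := 𝕂) A 0).const_mul z
  simp only [zero_smul, NormedSpace.exp_zero, one_mul] at h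
  exact f.toContinuousLinearMap.hasFDerivAt.comp_hasDerivAt 0 h

end Derivatives

theorem hasDerivAt_rotAngle_mul_exp {z : Mat3} (hsin : Real.sin (rotAngle z) ≠ 0)
    (v : Fin 3 → ℝ) :
    HasDerivAt (fun t : ℝ => rotAngle (z * NormedSpace.exp (t • crossMatrix v)))
      (rotAxis z ⬝ᵥ v) 0 := by
  have htrace : HasDerivAt
      (fun t : ℝ => ((z * NormedSpace.exp (t • crossMatrix v)).trace - 1) / 2)
      (-(axialVec z ⬝ᵥ v) / 2) 0 := by
    rw [← trace_mul_crossMatrix]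
    exact ((hasDerivAt_linearMap_mul_exp_smul (Matrix.traceLinearMap (Fin 3) ℝ ℝ) z
      (crossMatrix v)).sub_const 1).div_const 2
  obtain ⟨hlow, hupp⟩ := abs_lt.mp (abs_trace_sub_one_div_two_lt_one hsin)
  refine ((Real.hasDerivAt_arccos hlow.ne' hupp.ne).comp_of_eq 0 htrace (by simp)).congr_deriv ?_
  rw [← Real.sin_arccos, ← rotAngle, rotAxis_eq_smul_axialVec, smul_dotProduct, smul_eq_mul]
  field_simp

theorem IsSO3.hasDerivAt_rotAxis_mul_exp {z : Mat3} (hz : IsSO3 z)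
    (hsin : Real.sin (rotAngle z) ≠ 0) (v : Fin 3 → ℝ) :
    HasDerivAt (fun t : ℝ => rotAxis (z * NormedSpace.exp (t • crossMatrix v)))
      (((1 + Real.cos (rotAngle z)) / (2 * Real.sin (rotAngle z))) •
          (v - (rotAxis z ⬝ᵥ v) • rotAxis z)
        + (1 / 2 : ℝ) • rotAxis z ⨯₃ v) 0 := by
  have hz0 : z * NormedSpace.exp ((0 : ℝ) • crossMatrix v) = z := by simp
  have haxial := hasDerivAt_linearMap_mul_exp_smul axialVec z (crossMatrix v)
  have hinv := ((hasDerivAt_rotAngle_mul_exp hsin v).sin.const_mul 2).fun_inv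
    (by rw [hz0]; exact mul_ne_zero two_ne_zero hsin)
  simp only [rotAxis_eq_smul_axialVec (_ * _)]
  refine (hinv.smul haxial).congr_deriv ?_
  rw [hz0, hz.axialVec_mul_crossMatrix hsin, axialVec_eq_smul_rotAxis hsin]
  match_scalars <;> field_simp
  ring

theorem Lgen_eq_crossMatrix_single (j : Fin 3) : Lgen j = crossMatrix (Pi.single j 1) := by
  fin_cases j <;> ext a b <;> fin_cases a <;> fin_cases b <;> simp [Lgen, crossMatrix]

theorem cross_single_apply_of_ne (w : Fin 3 → ℝ) {i j n : Fin 3} (hij : i ≠ j) (hjn : j ≠ n)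
    (hin : i ≠ n) : (w ⨯₃ Pi.single j 1) i = eps3 j i n * w n := by
  fin_cases i <;> fin_cases j <;> fin_cases n <;> simp_all [cross_apply, eps3]

theorem IsSO3.deriv_axisComp_mul_exp {z : Mat3} (hz : IsSO3 z)
    (hsin : Real.sin (rotAngle z) ≠ 0) (i j : Fin 3) :
    deriv (fun t : ℝ => axisComp i (z * NormedSpace.exp (t • Lgen j))) 0 =
      (1 + Real.cos (rotAngle z)) / (2 * Real.sin (rotAngle z)) *
          ((Pi.single j 1 : Fin 3 → ℝ) i - axisComp j z * axisComp i z)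
        + 1 / 2 * (rotAxis z ⨯₃ Pi.single j 1) i := by
  have h := hasDerivAt_pi.mp (hz.hasDerivAt_rotAxis_mul_exp hsin (Pi.single j 1)) i
  rw [← Lgen_eq_crossMatrix_single, dotProduct_single_one] at h
  exact h.deriv

theorem derivative_of_rotation_axis_components
    (x y : Mat3) (hx : IsSO3 x) (hy : IsSO3 y)
    (h0 : rotAngle (y⁻¹ * x) ≠ 0) (hpi : rotAngle (y⁻¹ * x) ≠ π) :
    (∀ i j n : Fin 3, i ≠ j → j ≠ n → i ≠ n →
      XxAxis j i x y
        = -(axisComp i (y⁻¹ * x) * axisComp j (y⁻¹ * x)) *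
            ((1 + Real.cos (rotAngle (y⁻¹ * x))) / (2 * Real.sin (rotAngle (y⁻¹ * x))))
          + (eps3 j i n / 2) * axisComp n (y⁻¹ * x)) ∧
    (∀ i : Fin 3,
      XxAxis i i x y
        = ((1 + Real.cos (rotAngle (y⁻¹ * x))) / (2 * Real.sin (rotAngle (y⁻¹ * x)))) *
            (1 - axisComp i (y⁻¹ * x) ^ 2)) := by
  have hz := hx.inv_mul hy
  have hsin := sin_rotAngle_ne_zero h0 hpi
  simp only [XxAxis, ← Matrix.mul_assoc, hz.deriv_axisComp_mul_exp hsin]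
  refine ⟨fun i j n hij hjn hin => ?_, fun i => ?_⟩
  · rw [cross_single_apply_of_ne _ hij hjn hin, Pi.single_eq_of_ne hij, rotAxis]
    ring
  · rw [cross_single_apply_self, Pi.single_eq_same]
    ring
end
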